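/- Let n ≥ 2 and 0 < D < π, and let C ⊆ S^n be a D-maximal set. Then for every z ∈ ∂C (boundary taken in S^n) there exists y ∈ ∂C with d(z,y) = D. -/

import Mathlib

/-!
A point `z` of the frontier of a `D`-maximal set `C` must be at distance `D` from some point of `C`:
otherwise, by compactness, `C` lies within distance `D - ε` of `z`, and adjoining a small closed
geodesic ball around `z` to `C` keeps the diameter at most `D` (triangle inequality). Since `z` is a
frontier point, this adds a nonempty open set to `C`, so the volume strictly increases, which
contradicts maximality. A point `y ∈ C` at distance `D` from `z` cannot be interior to `C`, because
prolonging the geodesic from `z` to `y` slightly beyond `y` reaches points at distance more than `D`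
from `z`; here `D < π` is needed.

The volume comparison needs that the `n`-dimensional Hausdorff measure on `S^n` is finite
(`sphVol_lt_top`) and positive on nonempty open sets (`sphVol_pos`). Both follow from the fact that
stereographic projection and its inverse are locally Lipschitz, since Hausdorff measure on the
`n`-dimensional target space is a Haar measure.
-/

open MeasureTheory

noncomputable section

/-- Euclidean space `ℝ^{n+1}`. -/
abbrev Esp (n : ℕ) : Type := EuclideanSpace ℝ (Fin (n + 1))

/-- The unit sphere `S^n ⊆ ℝ^{n+1}`, as a subtype. -/
abbrev Sph (n : ℕ) : Type := Metric.sphere (0 : Esp n) 1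

/-- Geodesic distance `d(x,y) = arccos ⟨x,y⟩` on the sphere. -/
def gd {n : ℕ} (x y : Sph n) : ℝ :=
  Real.arccos (inner (𝕜 := ℝ) (x : Esp n) (y : Esp n))

/-- Closed geodesic ball `B(z,r) = {x ∈ Sⁿ : d(x,z) ≤ r}`. -/
def sphBall {n : ℕ} (z : Sph n) (r : ℝ) : Set (Sph n) := {x | gd x z ≤ r}

/-- Geodesic diameter `diam X = sup {d(x,y) : x, y ∈ X}`. -/
def sphDiam {n : ℕ} (X : Set (Sph n)) : ℝ :=
  sSup {r | ∃ x ∈ X, ∃ y ∈ X, r = gd x y}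

/-- Spherical volume: the `n`-dimensional (Hausdorff) surface measure on `S^n`. -/
def sphVol (n : ℕ) : Measure (Sph n) := μH[(n : ℝ)]

/-- A set `C ⊆ S^n` is `D`-maximal: compact, of geodesic diameter at most `D`, and of
maximal spherical volume among compact sets of diameter at most `D`. -/
def DMaximal (n : ℕ) (D : ℝ) (C : Set (Sph n)) : Prop :=
  IsCompact C ∧ sphDiam C ≤ D ∧
    sphVol n C =
      sSup {v | ∃ X : Set (Sph n), IsCompact X ∧ sphDiam X ≤ D ∧ v = sphVol n X}

open Metric Module Set Filter Topology

/-! ### Hausdorff measure on the sphere -/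

lemma isAddHaar_hausdorff_orthogonal {n : ℕ} (v : Sph n) :
    Measure.IsAddHaarMeasure (μH[(n : ℝ)] : Measure (Submodule.span ℝ {(v : Esp n)})ᗮ) := by
  have : Fact (finrank ℝ (Esp n) = n + 1) := ⟨by simp⟩
  have h : finrank ℝ (Submodule.span ℝ {(v : Esp n)})ᗮ = n :=
    Submodule.finrank_orthogonal_span_singleton (ne_zero_of_mem_unit_sphere v)
  have := isAddHaarMeasure_hausdorffMeasure (E := (Submodule.span ℝ {(v : Esp n)})ᗮ)
  rwa [h] at this

/-- Inverse stereographic projection is `C¹`, hence maps a small ball to a neighbourhood of finite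
measure. -/
lemma exists_nhds_sphVol_lt_top {n : ℕ} (p : Sph n) : ∃ s ∈ 𝓝 p, sphVol n s < ⊤ := by
  have hv : ‖((-p : Sph n) : Esp n)‖ = 1 := norm_eq_of_mem_sphere (-p)
  set e := stereographic hv with he
  have := isAddHaar_hausdorff_orthogonal (-p)
  have hp : e.symm 0 = p := by
    rw [← stereographic_neg_apply p]
    refine e.left_inv fun h => ?_
    exact ne_neg_of_mem_unit_sphere ℝ p h
  have hd : ContDiff ℝ 1 (fun w : (Submodule.span ℝ {((-p : Sph n) : Esp n)})ᗮ =>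
      stereoInvFunAux ((-p : Sph n) : Esp n) (w : Esp n)) :=
    contDiff_stereoInvFunAux.comp (Submodule.subtypeL (Submodule.span ℝ {((-p : Sph n) : Esp n)})ᗮ).contDiff
  obtain ⟨K, s, hs, hL⟩ := (hd.contDiffAt (x := 0)).exists_lipschitzOnWith
  have hL' : LipschitzOnWith K e.symm (s ∩ closedBall 0 1) := fun x hx y hy => hL hx.1 hy.1
  refine ⟨e.symm '' (s ∩ closedBall 0 1), ?_, ?_⟩
  · have h := (isOpenEmbedding_stereographic_symm hv).image_mem_nhds.2
      (inter_mem hs (closedBall_mem_nhds _ one_pos))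
    rwa [← he, hp] at h
  · refine (hL'.hausdorffMeasure_image_le (Nat.cast_nonneg n)).trans_lt ?_
    refine ENNReal.mul_lt_top (by simp) ?_
    exact (measure_mono inter_subset_right).trans_lt (isCompact_closedBall _ _).measure_lt_top

lemma sphVol_lt_top {n : ℕ} (C : Set (Sph n)) : sphVol n C < ⊤ := by
  have : IsLocallyFiniteMeasure (sphVol n) := ⟨exists_nhds_sphVol_lt_top⟩
  exact (measure_mono (subset_univ C)).trans_lt isCompact_univ.measure_lt_top

/-- A nonempty open set has positive volume: stereographic projection is locally Lipschitz and maps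
a small open piece of it onto an open set of positive measure. -/
lemma sphVol_pos {n : ℕ} {U : Set (Sph n)} (hU : IsOpen U) (hne : U.Nonempty) :
    0 < sphVol n U := by
  obtain ⟨p, hpU⟩ := hne
  have hv : ‖((-p : Sph n) : Esp n)‖ = 1 := norm_eq_of_mem_sphere (-p)
  set e := stereographic hv with he
  have := isAddHaar_hausdorff_orthogonal (-p)
  have hps : p ∈ e.source := fun h =>
    ne_neg_of_mem_unit_sphere ℝ p h
  have hd : ContDiffAt ℝ 1 (stereoToFun ((-p : Sph n) : Esp n)) (p : Esp n) := by
    refine contDiffOn_stereoToFun.contDiffAt (IsOpen.mem_nhds ?_ ?_)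
    · exact isOpen_ne_fun (innerSL ℝ _).continuous continuous_const
    · simp
      norm_num
  obtain ⟨K, s, hs, hL⟩ := hd.exists_lipschitzOnWith
  have hs' : ((↑) : Sph n → Esp n) ⁻¹' s ∈ 𝓝 p := continuous_subtype_val.continuousAt hs
  set V := interior (((↑) : Sph n → Esp n) ⁻¹' s) ∩ U ∩ e.source with hV
  have hVo : IsOpen V := (isOpen_interior.inter hU).inter e.open_source
  have hpV : p ∈ V := ⟨⟨mem_interior_iff_mem_nhds.2 hs', hpU⟩, hps⟩
  have hVs : V ⊆ ((↑) : Sph n → Esp n) ⁻¹' s := fun x hx => interior_subset hx.1.1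
  have hL' : LipschitzOnWith K e V := fun x hx y hy => hL (hVs hx) (hVs hy)
  have h1 : IsOpen (e '' V) := e.isOpen_image_of_subset_source hVo inter_subset_right
  have h2 : 0 < (μH[(n : ℝ)] : Measure (Submodule.span ℝ {((-p : Sph n) : Esp n)})ᗮ) (e '' V) :=
    h1.measure_pos _ ⟨_, mem_image_of_mem _ hpV⟩
  have h3 := hL'.hausdorffMeasure_image_le (d := n) (Nat.cast_nonneg n)
  have h4 : sphVol n V ≤ sphVol n U := measure_mono fun x hx => hx.1.2
  refine lt_of_lt_of_le (pos_iff_ne_zero.2 fun h0 => ?_) h4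
  have h0' : (μH[(n : ℝ)] : Measure (Sph n)) V = 0 := h0
  rw [h0', mul_zero] at h3
  exact absurd h2 (not_lt.2 h3)

/-! ### Geodesic distance -/

lemma gd_eq_angle {n : ℕ} (x y : Sph n) :
    gd x y = InnerProductGeometry.angle (x : Esp n) (y : Esp n) := by
  simp [gd, InnerProductGeometry.angle]

lemma gd_comm {n : ℕ} (x y : Sph n) : gd x y = gd y x := by
  simp only [gd, real_inner_comm]

lemma gd_triangle {n : ℕ} (x y z : Sph n) : gd x z ≤ gd x y + gd y z := by
  simp only [gd_eq_angle]
  exact InnerProductGeometry.angle_le_angle_add_angle _ _ _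

lemma gd_self {n : ℕ} (x : Sph n) : gd x x = 0 := by
  simp [gd]

lemma continuous_gd {n : ℕ} (z : Sph n) : Continuous (gd z) := by
  unfold gd
  fun_prop

lemma gd_le_of_sphDiam_le {n : ℕ} {C : Set (Sph n)} {D : ℝ} (h : sphDiam C ≤ D) {x y : Sph n}
    (hx : x ∈ C) (hy : y ∈ C) : gd x y ≤ D := by
  have hbdd : BddAbove {r | ∃ x ∈ C, ∃ y ∈ C, r = gd x y} := by
    refine ⟨Real.pi, ?_⟩
    rintro _ ⟨a, -, b, -, rfl⟩
    exact Real.arccos_le_pi _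
  exact (le_csSup hbdd ⟨x, hx, y, hy, rfl⟩).trans h

/-- If `y` is at distance `D ∈ (0, π)` from `z`, the geodesic from `z` through `y` continues past
`y` to points at distance greater than `D`. -/
lemma exists_gd_gt {n : ℕ} {D : ℝ} (hD0 : 0 < D) (hD1 : D < Real.pi) {z y : Sph n}
    (h : gd z y = D) {U : Set (Sph n)} (hU : U ∈ 𝓝 y) : ∃ x ∈ U, D < gd z x := by
  have hs : 0 < Real.sin D := Real.sin_pos_of_pos_of_lt_pi hD0 hD1
  have hsc := Real.sin_sq_add_cos_sq D
  have hc : inner ℝ (z : Esp n) (y : Esp n) = Real.cos D := by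
    rw [← h, gd_eq_angle, InnerProductGeometry.cos_angle]
    simp
  have hc' : inner ℝ (y : Esp n) (z : Esp n) = Real.cos D := by rw [real_inner_comm, hc]
  have hyy : inner ℝ (y : Esp n) (y : Esp n) = 1 := by simp
  have hzz : inner ℝ (z : Esp n) (z : Esp n) = 1 := by simp
  -- `w` is the unit tangent vector at `y` pointing away from `z`
  set w : Esp n := (Real.sin D)⁻¹ • (Real.cos D • (y : Esp n) - (z : Esp n)) with hw
  have hyw : inner ℝ (y : Esp n) w = 0 := by
    simp only [hw, inner_smul_right, inner_sub_right, hyy, hc']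
    ring
  have hzw : inner ℝ (z : Esp n) w = - Real.sin D := by
    simp only [hw, inner_smul_right, inner_sub_right, hzz, hc]
    field_simp
    linarith
  have hww : inner ℝ w w = 1 := by
    conv_lhs => rw [hw, inner_smul_left, inner_sub_left, inner_smul_left, hyw, hzw]
    simp
    field_simp
  have hwy : inner ℝ w (y : Esp n) = 0 := by rw [real_inner_comm, hyw]
  let γ : ℝ → Sph n := fun t => ⟨Real.cos t • (y : Esp n) + Real.sin t • w, by
    rw [mem_sphere_zero_iff_norm, ← sq_eq_sq₀ (norm_nonneg _) zero_le_one,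
      ← real_inner_self_eq_norm_sq]
    simp only [inner_add_left, inner_add_right, inner_smul_left, inner_smul_right, hyw, hwy, hww,
      hyy]
    simp
    nlinarith [Real.sin_sq_add_cos_sq t]⟩
  have hγ : Continuous γ := by
    refine Continuous.subtype_mk ?_ _
    fun_prop
  have hγ0 : γ 0 = y := by
    ext1
    simp [γ]
  have hev : ∀ᶠ t in 𝓝[>] (0 : ℝ), γ t ∈ U ∧ t < Real.pi - D := by
    refine Eventually.filter_mono nhdsWithin_le_nhds ?_
    have h1 : γ ⁻¹' U ∈ 𝓝 (0 : ℝ) := hγ.continuousAt.preimage_mem_nhds (by rwa [hγ0])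
    filter_upwards [h1, Iio_mem_nhds (sub_pos.2 hD1)] with t ht ht'
    exact ⟨ht, ht'⟩
  obtain ⟨t, ⟨htU, htD⟩, ht0⟩ := (hev.and self_mem_nhdsWithin).exists
  have ht0' : 0 < t := ht0
  refine ⟨γ t, htU, ?_⟩
  have hin : inner ℝ (z : Esp n) (γ t : Esp n) = Real.cos (D + t) := by
    simp only [γ, inner_add_right, inner_smul_right, hc, hzw, Real.cos_add]
    ring
  rw [gd, hin, Real.arccos_cos (by linarith) (by linarith)]
  linarith

/-! ### Maximal sets -/

/-- If every point of `C` were closer than `D` to the frontier point `z`, a small ball around `z`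
could be adjoined to `C`. -/
lemma exists_mem_gd_eq {n : ℕ} {D : ℝ} (hD0 : 0 < D) {C : Set (Sph n)} (hC : DMaximal n D C)
    {z : Sph n} (hz : z ∈ frontier C) : ∃ y ∈ C, gd z y = D := by
  obtain ⟨hcomp, hdiam, hmax⟩ := hC
  have hzC : z ∈ C := hcomp.isClosed.frontier_subset hz
  obtain ⟨y, hyC, hy⟩ := hcomp.exists_isMaxOn ⟨z, hzC⟩ (continuous_gd z).continuousOn
  refine ⟨y, hyC, le_antisymm (gd_le_of_sphDiam_le hdiam hzC hyC) (not_lt.1 fun hlt => ?_)⟩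
  obtain ⟨ε, hε, hεD, hεy⟩ : ∃ ε > 0, ε + ε ≤ D ∧ gd z y + ε ≤ D :=
    ⟨min (D / 2) (D - gd z y), lt_min (by linarith) (by linarith),
      by linarith [min_le_left (D / 2) (D - gd z y)],
      by linarith [min_le_right (D / 2) (D - gd z y)]⟩
  have hball : ∀ x, x ∈ sphBall z ε ↔ gd z x ≤ ε := fun x => by
    rw [gd_comm]
    rfl
  have hBclosed : IsClosed (sphBall z ε) := by
    have : sphBall z ε = gd z ⁻¹' Iic ε := by
      ext x
      exact hball x
    rw [this]
    exact isClosed_Iic.preimage (continuous_gd z)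
  have hCB : ∀ a ∈ C, ∀ b ∈ sphBall z ε, gd a b ≤ D := fun a ha b hb => by
    have h1 := gd_triangle a z b
    have h2 : gd z a ≤ gd z y := hy ha
    have h3 := (hball b).1 hb
    rw [gd_comm a z] at h1
    linarith
  have hdiam' : sphDiam (C ∪ sphBall z ε) ≤ D := by
    refine Real.sSup_le ?_ hD0.le
    rintro _ ⟨a, ha, b, hb, rfl⟩
    rcases ha with ha | ha <;> rcases hb with hb | hb
    · exact gd_le_of_sphDiam_le hdiam ha hb
    · exact hCB a ha b hb
    · rw [gd_comm]
      exact hCB b hb a ha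
    · have h1 := gd_triangle a z b
      have h2 := (hball a).1 ha
      have h3 := (hball b).1 hb
      rw [gd_comm a z] at h1
      linarith
  have hle : sphVol n (C ∪ sphBall z ε) ≤ sphVol n C := by
    rw [hmax]
    exact le_sSup ⟨_, hcomp.union hBclosed.isCompact, hdiam', rfl⟩
  -- the part of the open geodesic ball outside `C` is open and, as `z ∈ ∂C`, nonempty
  set U : Set (Sph n) := gd z ⁻¹' Iio ε ∩ Cᶜ with hU
  have hBo : IsOpen (gd z ⁻¹' Iio ε) := isOpen_Iio.preimage (continuous_gd z)
  have hUo : IsOpen U := hBo.inter hcomp.isClosed.isOpen_compl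
  have hUne : U.Nonempty := by
    rw [frontier_eq_closure_inter_closure] at hz
    exact mem_closure_iff.1 hz.2 _ hBo (by simpa [gd_self] using hε)
  have hdisj : Disjoint C U := disjoint_left.2 fun x hx hxU => hxU.2 hx
  have hsub : C ∪ U ⊆ C ∪ sphBall z ε :=
    union_subset_union_right _ fun x hx => (hball x).2 (le_of_lt hx.1)
  have h1 : sphVol n C + sphVol n U ≤ sphVol n C := by
    rw [← measure_union hdisj hUo.measurableSet]
    exact (measure_mono hsub).trans hle
  exact absurd h1 (not_le.2 (ENNReal.lt_add_right (sphVol_lt_top C).ne (sphVol_pos hUo hUne).ne.symm))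

/-- every boundary point of a `D`-maximal set has a boundary point at
geodesic distance exactly `D`. -/
theorem DMaximal_boundary_diametral (n : ℕ) (hn : 2 ≤ n) (D : ℝ) (hD0 : 0 < D)
    (hD1 : D < Real.pi) (C : Set (Sph n)) (hC : DMaximal n D C)
    (z : Sph n) (hz : z ∈ frontier C) :
    ∃ y ∈ frontier C, gd z y = D := by
  obtain ⟨y, hyC, hy⟩ := exists_mem_gd_eq hD0 hC hz
  refine ⟨y, ⟨subset_closure hyC, fun hint => ?_⟩, hy⟩
  obtain ⟨x, hx, hlt⟩ := exists_gd_gt hD0 hD1 hy (mem_interior_iff_mem_nhds.1 hint)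
  exact absurd (gd_le_of_sphDiam_le hC.2.1 (hC.1.isClosed.frontier_subset hz) hx) (not_le.2 hlt)
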